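/- Let γ ∈ ℝ, let q ≥ 3 be fixed, and let K be a location-scale invariant kernel, not everywhere constant, such that ||K||_a := (E[|K((Z_{q−j:q−1})_{j=1}^{q})|^a])^{1/a} < ∞ for all a > 0 (Z's iid standard GP(γ), Z_{0:q−1} := 0). For index sets S, S' with |S| = |S'| = m and |S ∩ S'| = 1, put ζ_{m,1} = cov(K_m(Z_S), K_m(Z_{S'})) with the Z's iid standard GP(γ). Then for every integer m ≥ q and every a > 2, ζ_{m,1} ≤ (2q)^{1−2/a} ||K||_a² m^{2/a−1}. -/

import Mathlib

open MeasureTheory ProbabilityTheory Filter Real Set Topology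
open scoped ENNReal NNReal Classical

noncomputable section

/-- The `j`-th largest entry of the tuple `x` (`j = 0` gives the maximum, `j = 1` the
second largest, ...); `0` when `j` is out of range. -/
def descStat {m : ℕ} (x : Fin m → ℝ) (j : ℕ) : ℝ :=
  if h : j < m then (x ∘ Tuple.sort x) ⟨m - 1 - j, by omega⟩ else 0

/-- The kernel of degree `m` obtained from `K` by applying it to the top-`q`
(descending) order statistics: `K_m(x_1,…,x_m) = K(x_{m:m},…,x_{m−q+1:m})`. -/
def Km {q : ℕ} (K : (Fin q → ℝ) → ℝ) (m : ℕ) (x : Fin m → ℝ) : ℝ :=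
  K fun j => descStat x (j : ℕ)

/-- `K(a x_1 + b, …, a x_q + b) = K(x_1, …, x_q)` for all `a > 0`, `b ∈ ℝ`. -/
def LocScaleInvariant {q : ℕ} (K : (Fin q → ℝ) → ℝ) : Prop :=
  ∀ a b : ℝ, 0 < a → ∀ x : Fin q → ℝ, K (fun j => a * x j + b) = K x

/-- `h_γ(y) = (y^γ - 1)/γ`, interpreted as `log y` when `γ = 0`. -/
def hGamma (γ : ℝ) (y : ℝ) : ℝ := if γ = 0 then Real.log y else (y ^ γ - 1) / γ

lemma measurable_hGamma (γ : ℝ) : Measurable (hGamma γ) := by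
  unfold hGamma
  split_ifs
  · exact Real.measurable_log
  · fun_prop

/-- The uniform distribution on `(0,1)`. -/
def unif01 : Measure ℝ := volume.restrict (Set.Ioo (0:ℝ) 1)

instance : IsProbabilityMeasure unif01 := ⟨by simp [unif01]⟩

/-- The standard Pareto(1) distribution, with cdf `1 - 1/y` for `y ≥ 1`. -/
def pareto1 : Measure ℝ := ProbabilityTheory.paretoMeasure 1 1

instance : IsProbabilityMeasure pareto1 :=
  ProbabilityTheory.isProbabilityMeasure_paretoMeasure one_pos one_pos

/-- The standard generalized Pareto distribution `GP(γ)`: the law of `h_γ(Y)` for `Y`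
standard Pareto(1). -/
def gpMeasure (γ : ℝ) : Measure ℝ := pareto1.map (hGamma γ)

instance (γ : ℝ) : IsProbabilityMeasure (gpMeasure γ) :=
  Measure.isProbabilityMeasure_map (measurable_hGamma γ).aemeasurable

/-- The unit exponential distribution: the law of `-log U` for `U` uniform on `(0,1)`. -/
def expMeasure1 : Measure ℝ := unif01.map fun u => -Real.log u

instance : IsProbabilityMeasure expMeasure1 :=
  Measure.isProbabilityMeasure_map Real.measurable_log.neg.aemeasurable

/-- The Erlang(q) distribution: the law of the sum of `q` independent unit exponentials. -/
def erlangMeasure (q : ℕ) : Measure ℝ :=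
  (Measure.pi fun _ : Fin q => expMeasure1).map fun e => ∑ i, e i

instance (q : ℕ) : IsProbabilityMeasure (erlangMeasure q) :=
  Measure.isProbabilityMeasure_map
    (Finset.measurable_sum _ fun i _ => measurable_pi_apply i).aemeasurable

/-- The joint law of `r` iid `GP(γ)` random variables. -/
def gpPi (γ : ℝ) (r : ℕ) : Measure (Fin r → ℝ) := Measure.pi fun _ => gpMeasure γ

instance (γ : ℝ) (r : ℕ) : IsProbabilityMeasure (gpPi γ r) := by
  unfold gpPi; infer_instance

/-- The vector `(Z_{q-j:q-1})_{j=1}^{q}`: the descending order statistics of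
`z_1,…,z_{q-1}` with an extra last entry `Z_{0:q-1} := 0`. -/
def refVec {q : ℕ} (z : Fin (q-1) → ℝ) : Fin q → ℝ := fun j => descStat z (j : ℕ)

/-- `θ = E[K((Z_{q-j:q-1})_{j=1}^{q})]` for iid `GP(γ)` variables `Z_1,…,Z_{q-1}`. -/
def thetaK (γ : ℝ) {q : ℕ} (K : (Fin q → ℝ) → ℝ) : ℝ :=
  ∫ z, K (refVec z) ∂(gpPi γ (q-1))

/-- all moments of `K((Z_{q-j:q-1})_{j=1}^{q})` are finite. -/
def MomentCond (γ : ℝ) {q : ℕ} (K : (Fin q → ℝ) → ℝ) : Prop :=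
  ∀ p : ℝ, 0 < p →
    ∫⁻ z, ENNReal.ofReal (|K (refVec z)| ^ p) ∂(gpPi γ (q-1)) < ⊤

/-- The asymptotic variance
`σ²_K(γ) = ∫_0^∞ (E[K̄_{q+1}((Z_{q-j:q-1})_{j=1}^q, h_γ(S_q/x))])² dx`. -/
def sigmaSqK (γ : ℝ) {q : ℕ} (K : (Fin q → ℝ) → ℝ) : ℝ :=
  ∫ x in Set.Ioi (0:ℝ),
    (∫ zs : (Fin (q-1) → ℝ) × ℝ,
        (Km K (q+1) (Fin.snoc (refVec zs.1) (hGamma γ (zs.2 / x))) - thetaK γ K)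
      ∂((gpPi γ (q-1)).prod (erlangMeasure q))) ^ 2

/-- The U-statistic with kernel `K_m` evaluated on the sample `z`. -/
def UStat {q : ℕ} (K : (Fin q → ℝ) → ℝ) (m n : ℕ) (z : Fin n → ℝ) : ℝ :=
  ((n.choose m : ℝ))⁻¹ *
    ∑ I ∈ Finset.powersetCard m (Finset.univ : Finset (Fin n)),
      Km K I.card fun j => z (I.orderIsoOfFin rfl j).1

/-- Condition on the degree sequence: `m = o(n^{1-ε})` and `log n = o(m^{1-δ})`. -/
def DegreeCond (m : ℕ → ℕ) : Prop :=
  ∃ ε > (0:ℝ), ∃ δ > (0:ℝ),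
    Tendsto (fun n => (m n : ℝ) / (n : ℝ) ^ (1 - ε)) atTop (𝓝 0) ∧
    Tendsto (fun n : ℕ => Real.log n / (m n : ℝ) ^ (1 - δ)) atTop (𝓝 0)

/-- `ζ_{m,ℓ} = cov(K_m(Z_S), K_m(Z_{S'}))` for the blocks `S = [1:m]`,
`S' = [(m-ℓ+1):(2m-ℓ)]` (zero-indexed here), which overlap in `ℓ` indices. -/
def zetaCov {Ω : Type*} [MeasurableSpace Ω] (P : Measure Ω) {q : ℕ}
    (K : (Fin q → ℝ) → ℝ) (Z : ℕ → Ω → ℝ) (m ℓ : ℕ) : ℝ :=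
  (∫ ω, Km K m (fun i : Fin m => Z i ω) * Km K m (fun i : Fin m => Z (m - ℓ + i) ω) ∂P)
    - (∫ ω, Km K m (fun i : Fin m => Z i ω) ∂P)
      * (∫ ω, Km K m (fun i : Fin m => Z (m - ℓ + i) ω) ∂P)

/-- Convergence in distribution to a Gaussian, expressed via pointwise convergence of
the cumulative distribution functions (the Gaussian cdf being continuous). -/
def TendstoGaussian {Ω : Type*} [MeasurableSpace Ω] (P : Measure Ω)
    (T : ℕ → Ω → ℝ) (μ : ℝ) (v : ℝ≥0) : Prop :=
  ∀ x : ℝ, Tendsto (fun n => (P {ω | T n ω ≤ x}).toReal) atTop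
    (𝓝 ((gaussianReal μ v (Set.Iic x)).toReal))

/-- Convergence in probability to the constant `c`. -/
def TendstoInProb {Ω : Type*} [MeasurableSpace Ω] (P : Measure Ω)
    (T : ℕ → Ω → ℝ) (c : ℝ) : Prop :=
  ∀ ε : ℝ, 0 < ε → Tendsto (fun n => (P {ω | ε ≤ |T n ω - c|}).toReal) atTop (𝓝 0)

/-- `‖K‖_a = (E[|K((Z_{q-j:q-1})_{j=1}^q)|^a])^{1/a}`. -/
def normKa (γ : ℝ) {q : ℕ} (K : (Fin q → ℝ) → ℝ) (a : ℝ) : ℝ :=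
  (∫ z, |K (refVec z)| ^ a ∂(gpPi γ (q-1))) ^ (1/a)

/-!
Let `w` be the observation shared by the two samples `(w, u)` and `(w, v)`. If at least `q` entries
of `u` and at least `q` entries of `v` exceed `w`, then `w` does not enter either kernel, and
given `w = c` the two kernels are independent. The excesses of iid `GP(γ)` variables over a
threshold `c` are again iid `GP(γ)` up to a common scale, so for a location-scale invariant kernel
conditioning on at least `q` exceedances of `c` does not change the mean; hence this event
contributes at most the product of the means to the mixed moment. By exchangeability its complement
has probability at most `2 q / m`, and Hölder's inequality bounds the contribution of the
complement.
-/

/-- The number of entries of the tuple `x` exceeding the level `c`, i.e. the rank of `c` among the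
entries counted from the top. All order-statistics arguments go through it. -/
def exceedCount {n : ℕ} (x : Fin n → ℝ) (c : ℝ) : ℕ := Finset.card {i | c < x i}

/-- The decreasing rearrangement of the tuple `x`. -/
def descSort {n : ℕ} (x : Fin n → ℝ) : Fin n → ℝ := fun j => descStat x j

section OrderStatistics

variable {n : ℕ} (x : Fin n → ℝ)

lemma exceedCount_comp_perm (σ : Equiv.Perm (Fin n)) (c : ℝ) :
    exceedCount (x ∘ σ) c = exceedCount x c :=
  Finset.card_equiv σ (by simp)

lemma exceedCount_le (c : ℝ) : exceedCount x c ≤ n :=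
  (Finset.card_le_univ _).trans_eq (Fintype.card_fin n)

lemma exceedCount_antitone : Antitone (exceedCount x) := fun _ _ hcd =>
  Finset.card_le_card (Finset.monotone_filter_right _ fun _ _ => hcd.trans_lt)

lemma exceedCount_lt_of_lt_apply {c : ℝ} {i : Fin n} (h : c < x i) :
    exceedCount x (x i) < exceedCount x c := by
  refine Finset.card_lt_card (Finset.ssubset_iff_of_subset ?_ |>.2 ⟨i, by simpa, by simp⟩)
  exact Finset.monotone_filter_right _ fun _ _ => h.trans

variable {x} in
lemma exceedCount_comp_injective (hx : Function.Injective x) :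
    Function.Injective fun i => exceedCount x (x i) := by
  intro i j hij
  rcases lt_trichotomy (x i) (x j) with h | h | h
  · exact absurd hij (exceedCount_lt_of_lt_apply x h).ne'
  · exact hx h
  · exact absurd hij (exceedCount_lt_of_lt_apply x h).ne

variable {x} in
lemma card_exceedCount_lt_le (hx : Function.Injective x) (q : ℕ) :
    Finset.card {i | exceedCount x (x i) < q} ≤ q := by
  simpa using Finset.card_le_card_of_injOn (t := Finset.range q) (fun i => exceedCount x (x i))
    (by simp [Set.MapsTo]) (exceedCount_comp_injective hx).injOn

lemma exceedCount_eq_add_removeNth (x : Fin (n + 1) → ℝ) (i : Fin (n + 1)) (c : ℝ) :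
    exceedCount x c = (if c < x i then 1 else 0) + exceedCount (i.removeNth x) c := by
  rw [exceedCount, exceedCount, Finset.card_filter, Finset.card_filter,
    Fin.sum_univ_succAbove _ i]
  rfl

lemma exceedCount_removeNth_self (x : Fin (n + 1) → ℝ) (i : Fin (n + 1)) :
    exceedCount (i.removeNth x) (x i) = exceedCount x (x i) := by
  simp [exceedCount_eq_add_removeNth x i]

variable {x} in
lemma lt_exceedCount_iff_of_antitone (hx : Antitone x) (j : Fin n) (c : ℝ) :
    j < exceedCount x c ↔ c < x j :=
  Tuple.lt_card_gt_iff_apply_gt_of_antitone hx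

lemma antitone_descSort : Antitone (descSort x) := by
  intro i j hij
  simp only [descSort, descStat, i.2, j.2, dif_pos]
  exact Tuple.monotone_sort x (by simp only [Fin.mk_le_mk]; omega)

lemma descSort_eq_comp_perm : ∃ σ : Equiv.Perm (Fin n), descSort x = x ∘ σ := by
  refine ⟨Fin.revPerm.trans (Tuple.sort x), funext fun j => ?_⟩
  have : (⟨n - 1 - j, by omega⟩ : Fin n) = j.rev := Fin.ext (by simp [Fin.val_rev]; omega)
  simp [descSort, descStat, this]

variable {x} in
lemma lt_descStat_iff {j : ℕ} (hj : j < n) {c : ℝ} :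
    c < descStat x j ↔ j < exceedCount x c := by
  obtain ⟨σ, hσ⟩ := descSort_eq_comp_perm x
  rw [← exceedCount_comp_perm x σ, ← hσ]
  exact (lt_exceedCount_iff_of_antitone (antitone_descSort x) ⟨j, hj⟩ c).symm

variable {x} in
lemma strictAnti_descSort (hx : Function.Injective x) : StrictAnti (descSort x) := by
  obtain ⟨σ, hσ⟩ := descSort_eq_comp_perm x
  exact (antitone_descSort x).strictAnti_of_injective (hσ ▸ hx.comp σ.injective)

lemma descStat_removeNth {x : Fin (n + 1) → ℝ} {i : Fin (n + 1)} {j : ℕ}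
    (h : j < exceedCount x (x i)) : descStat (i.removeNth x) j = descStat x j := by
  have hj : j < exceedCount (i.removeNth x) (x i) := (exceedCount_removeNth_self x i).symm ▸ h
  have hjn : j < n := hj.trans_le (exceedCount_le _ _)
  refine eq_of_forall_lt_iff fun c => ?_
  rw [lt_descStat_iff hjn, lt_descStat_iff (by omega), exceedCount_eq_add_removeNth x i]
  split_ifs with hc
  · have := hj.trans_le (exceedCount_antitone _ hc.le)
    omega
  · rw [zero_add]

lemma Km_removeNth {q : ℕ} (K : (Fin q → ℝ) → ℝ) {x : Fin (n + 1) → ℝ} {i : Fin (n + 1)}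
    (h : q ≤ exceedCount x (x i)) : Km K n (i.removeNth x) = Km K (n + 1) x :=
  congrArg K <| funext fun j => descStat_removeNth (j.2.trans_le h)

lemma refVec_eq_snoc_descSort {k : ℕ} (z : Fin k → ℝ) :
    refVec (q := k + 1) z = Fin.snoc (descSort z) 0 := by
  refine funext (Fin.lastCases ?_ fun j => ?_)
  · simp [refVec, descStat]
  · simp [refVec, descSort]

lemma measurable_exceedCount :
    Measurable fun p : (Fin n → ℝ) × ℝ => exceedCount p.1 p.2 := by
  simp only [exceedCount, Finset.card_filter]
  refine Finset.measurable_fun_sum _ fun i _ => Measurable.ite ?_ measurable_const measurable_const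
  exact measurableSet_lt measurable_snd (by fun_prop)

@[fun_prop]
lemma measurable_descStat (j : ℕ) : Measurable fun x : Fin n → ℝ => descStat x j := by
  by_cases hj : j < n
  · refine measurable_of_Ioi fun c => ?_
    simp only [preimage, mem_Ioi, lt_descStat_iff hj]
    exact measurableSet_lt measurable_const
      (measurable_exceedCount.comp (measurable_id.prodMk measurable_const))
  · simp only [descStat, hj, dite_false, measurable_const]

lemma measurable_descSort : Measurable (descSort : (Fin n → ℝ) → Fin n → ℝ) :=
  measurable_pi_lambda _ fun _ => measurable_descStat _

lemma measurable_refVec {q : ℕ} : Measurable (refVec (q := q)) :=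
  measurable_pi_lambda _ fun _ => measurable_descStat _

lemma measurable_Km {q : ℕ} {K : (Fin q → ℝ) → ℝ} (hK : Measurable K) : Measurable (Km K n) :=
  hK.comp (measurable_pi_lambda _ fun _ => measurable_descStat _)

end OrderStatistics

section ProductMeasure

lemma ae_ne_of_indepFun {Ω β : Type*} [MeasurableSpace Ω] [MeasurableSpace β] [MeasurableEq β]
    {P : Measure Ω} [IsFiniteMeasure P] {X Y : Ω → β} (hX : AEMeasurable X P)
    (hY : AEMeasurable Y P) [NullSingletonClass (P.map Y)] (h : IndepFun X Y P) :
    ∀ᵐ ω ∂P, X ω ≠ Y ω := by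
  have hdiag : (P.map fun ω => (X ω, Y ω)) (diagonal β) = 0 := by
    rw [(indepFun_iff_map_prod_eq_prod_map_map hX hY).1 h,
      Measure.measure_prod_null measurableSet_diagonal]
    refine .of_forall fun x => ?_
    have : Prod.mk x ⁻¹' diagonal β = {x} := by ext; simp [eq_comm]
    simp only [this, measure_singleton, Pi.zero_apply]
  exact ae_of_ae_map (hX.prodMk hY) (p := fun p => p.1 ≠ p.2) (compl_mem_ae_iff.2 hdiag)

lemma ae_injective_of_iIndepFun {Ω β ι : Type*} [MeasurableSpace Ω] [MeasurableSpace β]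
    [MeasurableEq β] [Countable ι] {P : Measure Ω} [IsFiniteMeasure P] {X : ι → Ω → β}
    (hX : ∀ i, AEMeasurable (X i) P) [∀ i, NullSingletonClass (P.map (X i))]
    (h : iIndepFun X P) : ∀ᵐ ω ∂P, Function.Injective fun i => X i ω := by
  have hne : ∀ᵐ ω ∂P, ∀ i j, i ≠ j → X i ω ≠ X j ω := by
    simp only [ae_all_iff]
    exact fun i j hij => ae_ne_of_indepFun (hX i) (hX j) (h.indepFun hij)
  filter_upwards [hne] with ω hω i j hij
  exact not_imp_not.1 (hω i j) hij

variable {ι β : Type*} [Fintype ι] [MeasurableSpace β]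

lemma pi_ae_injective [MeasurableEq β] (μ : Measure β) [IsProbabilityMeasure μ]
    [NullSingletonClass μ] : ∀ᵐ x ∂Measure.pi fun _ : ι => μ, Function.Injective x := by
  have hmap (i : ι) : (Measure.pi fun _ : ι => μ).map (fun x => x i) = μ :=
    (measurePreserving_eval (fun _ => μ) i).map_eq
  have (i : ι) : NullSingletonClass ((Measure.pi fun _ : ι => μ).map fun x => x i) := by
    rwa [hmap i]
  exact ae_injective_of_iIndepFun (fun i => (measurable_pi_apply i).aemeasurable)
    (iIndepFun_pi (X := fun _ x => x) fun _ => aemeasurable_id)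

lemma measurePreserving_comp_perm (μ : Measure β) [SigmaFinite μ] (σ : Equiv.Perm ι) :
    MeasurePreserving (fun x : ι → β => x ∘ σ) (Measure.pi fun _ => μ) (Measure.pi fun _ => μ) := by
  convert measurePreserving_piCongrLeft (fun _ => μ) σ.symm using 1
  refine funext fun x => funext fun i => ?_
  simpa [MeasurableEquiv.coe_piCongrLeft] using
    (Equiv.piCongrLeft_apply_apply (fun _ => β) σ.symm x (σ i)).symm

lemma pi_eq_smul_map {α : Type*} [MeasurableSpace α] {μ : Measure α} {ν : Measure β}
    [SigmaFinite μ] [SigmaFinite ν] {c : ℝ≥0∞} {f : α → β} (hf : Measurable f)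
    (h : ν = c • μ.map f) :
    (Measure.pi fun _ : ι => ν)
      = c ^ Fintype.card ι • (Measure.pi fun _ : ι => μ).map fun u i => f (u i) := by
  refine Measure.pi_eq fun s hs => ?_
  have hpre : (fun (u : ι → α) i => f (u i)) ⁻¹' univ.pi s = univ.pi fun i => f ⁻¹' s i := by
    ext; simp
  have hν (i : ι) : ν (s i) = c * μ (f ⁻¹' s i) := by
    rw [h, Measure.smul_apply, Measure.map_apply hf (hs i), smul_eq_mul]
  rw [Measure.smul_apply, Measure.map_apply (by fun_prop) (.univ_pi hs), hpre, Measure.pi_pi]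
  simp only [hν, Finset.prod_mul_distrib, Finset.prod_const, Finset.card_univ, smul_eq_mul]

lemma measurePreserving_append (μ : Measure β) [SigmaFinite μ] (k r : ℕ) :
    MeasurePreserving (fun p : (Fin k → β) × (Fin r → β) => Fin.append p.1 p.2)
      ((Measure.pi fun _ => μ).prod (Measure.pi fun _ => μ)) (Measure.pi fun _ => μ) := by
  convert (measurePreserving_piCongrLeft (fun _ => μ) finSumFinEquiv).comp
    (measurePreserving_sumPiEquivProdPi_symm (ι := Fin k) (ι' := Fin r) fun _ => μ) using 1
  refine funext fun p => funext (Fin.addCases (fun i => ?_) fun i => ?_)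
  · rw [Fin.append_left, ← finSumFinEquiv_apply_left, Function.comp_apply,
      MeasurableEquiv.coe_piCongrLeft, Equiv.piCongrLeft_apply_apply]
    rfl
  · rw [Fin.append_right, ← finSumFinEquiv_apply_right, Function.comp_apply,
      MeasurableEquiv.coe_piCongrLeft, Equiv.piCongrLeft_apply_apply]
    rfl

end ProductMeasure

section Chamber

lemma measurableSet_strictAnti (n : ℕ) : MeasurableSet {x : Fin n → ℝ | StrictAnti x} := by
  simp only [StrictAnti, measurableSet_setOfPred]
  refine Measurable.forall fun i => Measurable.forall fun j => measurable_const.imp ?_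
  exact measurableSet_setOfPred.1
    (measurableSet_lt (measurable_pi_apply j) (measurable_pi_apply i))

lemma strictAnti_comp_perm_iff {n : ℕ} {x : Fin n → ℝ} (hx : Function.Injective x)
    {τ : Equiv.Perm (Fin n)} (hτ : StrictAnti (x ∘ τ)) (σ : Equiv.Perm (Fin n)) :
    StrictAnti (x ∘ σ) ↔ σ = τ := by
  refine ⟨fun hσ => Equiv.ext fun i => hx ?_, fun h => h ▸ hτ⟩
  exact congrFun (Tuple.unique_antitone hσ.antitone hτ.antitone) i

lemma map_descSort_pi (μ : Measure ℝ) [IsProbabilityMeasure μ] [NullSingletonClass μ] (n : ℕ) :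
    (Measure.pi fun _ : Fin n => μ).map descSort
      = (n.factorial : ℝ≥0∞) • (Measure.pi fun _ => μ).restrict {x | StrictAnti x} := by
  refine Measure.ext_of_lintegral _ fun f hf => ?_
  have hg : Measurable ({x : Fin n → ℝ | StrictAnti x}.indicator f) :=
    hf.indicator (measurableSet_strictAnti n)
  have hsum : ∀ᵐ x ∂Measure.pi fun _ : Fin n => μ,
      f (descSort x) = ∑ σ : Equiv.Perm (Fin n), {x | StrictAnti x}.indicator f (x ∘ σ) := by
    filter_upwards [pi_ae_injective μ] with x hx
    obtain ⟨τ, hτ⟩ := descSort_eq_comp_perm x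
    have hanti : StrictAnti (x ∘ τ) := hτ ▸ strictAnti_descSort hx
    simp [indicator_apply, strictAnti_comp_perm_iff hx hanti, hτ]
  have hperm (σ : Equiv.Perm (Fin n)) := (measurePreserving_comp_perm μ σ).lintegral_comp hg
  rw [lintegral_map hf measurable_descSort, lintegral_congr_ae hsum, lintegral_finsetSum]
  · simp [hperm, Fintype.card_perm, lintegral_indicator (measurableSet_strictAnti n)]
  · exact fun σ _ => hg.comp (measurePreserving_comp_perm μ σ).measurable

variable {k r : ℕ}

lemma strictAnti_append_iff (u : Fin k → ℝ) (v : Fin (r + 1) → ℝ) :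
    StrictAnti (Fin.append u v) ↔ StrictAnti v ∧ StrictAnti u ∧ ∀ i, v 0 < u i := by
  refine ⟨fun h => ⟨fun i j hij => ?_, fun i j hij => ?_, fun i => ?_⟩, ?_⟩
  · simpa using h (Fin.natAdd_lt_natAdd_iff k |>.2 hij)
  · simpa using h (a := i.castAdd (r + 1)) (b := j.castAdd (r + 1)) hij
  · simpa using h (a := i.castAdd (r + 1)) (b := Fin.natAdd k 0) (by simp [Fin.lt_def])
  · rintro ⟨hv, hu, hvu⟩
    refine Fin.addCases (fun i => ?_) (fun i => ?_) <;>
      refine Fin.addCases (fun j => ?_) (fun j => ?_) <;> intro hij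
    · simpa using hu (a := i) (b := j) hij
    · simpa using (hv.antitone (Fin.zero_le j)).trans_lt (hvu i)
    · simp only [Fin.lt_def, Fin.val_natAdd, Fin.val_castAdd] at hij
      omega
    · simpa using hv (Fin.natAdd_lt_natAdd_iff k |>.1 hij)

lemma append_castLE (u : Fin k → ℝ) (v : Fin (r + 1) → ℝ) (j : Fin (k + 1)) :
    Fin.append u v (j.castLE (by omega)) = (Fin.snoc u (v 0) : Fin (k + 1) → ℝ) j := by
  refine Fin.lastCases ?_ (fun j => ?_) j
  · rw [Fin.snoc_last, ← Fin.append_right u v 0]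
    congr 1
  · rw [Fin.snoc_castSucc, ← Fin.append_left u v j]
    congr 1

lemma lintegral_strictAnti_append (μ : Measure ℝ) [SigmaFinite μ]
    {f : (Fin (k + (r + 1)) → ℝ) → ℝ≥0∞} (hf : Measurable f) :
    ∫⁻ x in {x | StrictAnti x}, f x ∂(Measure.pi fun _ => μ)
      = ∫⁻ v in {v : Fin (r + 1) → ℝ | StrictAnti v},
          ∫⁻ u in {u : Fin k → ℝ | StrictAnti u}, f (Fin.append u v)
            ∂(Measure.pi fun _ => μ.restrict (Ioi (v 0))) ∂(Measure.pi fun _ => μ) := by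
  have happend := measurePreserving_append μ k (r + 1)
  have hg := hf.indicator (measurableSet_strictAnti (k + (r + 1)))
  have hg' : Measurable fun p : (Fin k → ℝ) × (Fin (r + 1) → ℝ) =>
    {x | StrictAnti x}.indicator f (Fin.append p.1 p.2) := hg.comp happend.measurable
  rw [← lintegral_indicator (measurableSet_strictAnti _), ← happend.lintegral_comp hg,
    lintegral_prod_symm _ hg'.aemeasurable,
    ← lintegral_indicator (measurableSet_strictAnti _)]
  refine lintegral_congr fun v => ?_
  by_cases hv : StrictAnti v
  · have hset : {u : Fin k → ℝ | StrictAnti (Fin.append u v)}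
        = {u | StrictAnti u} ∩ univ.pi fun _ => Ioi (v 0) := by
      ext u; simp [strictAnti_append_iff, hv]
    rw [indicator_of_mem (by exact hv), ← Measure.restrict_pi_pi, Measure.restrict_restrict
      (measurableSet_strictAnti k), ← hset, ← lintegral_indicator]
    · rfl
    · rw [hset]
      exact (measurableSet_strictAnti k).inter (.univ_pi fun _ => measurableSet_Ioi)
  · simp [strictAnti_append_iff, hv]

end Chamber

/-- Threshold stability of `μ`: for `μ`-almost every level `t`, a variable with law `μ` conditioned
to exceed `t` has an excess over `t` distributed as a positive multiple of the variable itself.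
Generalized Pareto laws have this property, and it is what makes location-scale invariant functions
of the top order statistics independent of the threshold. -/
def ThresholdStable (μ : Measure ℝ) : Prop :=
  ∀ᵐ t ∂μ, ∃ a > 0, μ.restrict (Ioi t) = μ (Ioi t) • μ.map fun z => a * z + t

section ThresholdStable

variable {μ : Measure ℝ} [IsProbabilityMeasure μ] {k : ℕ} {K : (Fin (k + 1) → ℝ) → ℝ}
  {F G : ℝ → ℝ≥0∞}

lemma lintegral_snoc_excess (hK : Measurable K) (hLS : LocScaleInvariant K) (hF : Measurable F)
    {a t : ℝ} (ha : 0 < a) {c : ℝ≥0∞} (h : μ.restrict (Ioi t) = c • μ.map fun z => a * z + t) :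
    ∫⁻ u in {u : Fin k → ℝ | StrictAnti u}, F (K (Fin.snoc u t))
        ∂(Measure.pi fun _ => μ.restrict (Ioi t))
      = c ^ k * ∫⁻ u in {u : Fin k → ℝ | StrictAnti u}, F (K (Fin.snoc u 0))
        ∂(Measure.pi fun _ => μ) := by
  have haff : Measurable fun (u : Fin k → ℝ) i => a * u i + t := by fun_prop
  have hpre : (fun (u : Fin k → ℝ) i => a * u i + t) ⁻¹' {u | StrictAnti u}
      = {u | StrictAnti u} := by
    ext u
    simp [StrictAnti, ha]
  have hsnoc (u : Fin k → ℝ) : K (Fin.snoc (fun i => a * u i + t) t) = K (Fin.snoc u 0) := by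
    rw [← hLS a t ha (Fin.snoc u 0)]
    congr 1
    refine funext (Fin.lastCases ?_ fun i => ?_) <;> simp
  rw [pi_eq_smul_map (f := fun z => a * z + t) (by fun_prop) h, Fintype.card_fin,
    Measure.restrict_smul, lintegral_smul_measure, Measure.restrict_map haff
      (measurableSet_strictAnti k), lintegral_map (by fun_prop) haff, hpre, smul_eq_mul]
  simp only [hsnoc]

variable [NullSingletonClass μ]

lemma lintegral_refVec (hK : Measurable K) (hF : Measurable F) :
    ∫⁻ z : Fin k → ℝ, F (K (refVec z)) ∂(Measure.pi fun _ => μ)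
      = k.factorial * ∫⁻ u in {u : Fin k → ℝ | StrictAnti u}, F (K (Fin.snoc u 0))
        ∂(Measure.pi fun _ => μ) := by
  simp only [refVec_eq_snoc_descSort]
  rw [← smul_eq_mul, ← lintegral_smul_measure, ← map_descSort_pi, lintegral_map (by fun_prop)
    measurable_descSort]

lemma lintegral_Km_mul_descStat (hμ : ThresholdStable μ) (hK : Measurable K)
    (hLS : LocScaleInvariant K) (hF : Measurable F) (hG : Measurable G) (r : ℕ) :
    ∫⁻ x, F (Km K (k + (r + 1)) x) * G (descStat x k) ∂(Measure.pi fun _ => μ)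
      = (∫⁻ u in {u : Fin k → ℝ | StrictAnti u}, F (K (Fin.snoc u 0)) ∂(Measure.pi fun _ => μ))
        * ((k + (r + 1)).factorial * ∫⁻ v in {v : Fin (r + 1) → ℝ | StrictAnti v},
            μ (Ioi (v 0)) ^ k * G (v 0) ∂(Measure.pi fun _ => μ)) := by
  let f (y : Fin (k + (r + 1)) → ℝ) : ℝ≥0∞ :=
    F (K fun j => y (j.castLE (by omega))) * G (y (Fin.natAdd k 0))
  have hf : Measurable f := by fun_prop
  have hstable : ∀ᵐ v : Fin (r + 1) → ℝ ∂Measure.pi fun _ => μ,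
      ∃ a > 0, μ.restrict (Ioi (v 0)) = μ (Ioi (v 0)) • μ.map fun z => a * z + v 0 :=
    (Measure.quasiMeasurePreserving_eval (fun _ => μ) 0).ae hμ
  calc _ = ∫⁻ x, f (descSort x) ∂(Measure.pi fun _ => μ) := rfl
    _ = (k + (r + 1)).factorial * ∫⁻ x in {x | StrictAnti x}, f x ∂(Measure.pi fun _ => μ) := by
        rw [← lintegral_map hf measurable_descSort, map_descSort_pi, lintegral_smul_measure,
          smul_eq_mul]
    _ = (k + (r + 1)).factorial * ∫⁻ v in {v : Fin (r + 1) → ℝ | StrictAnti v},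
          (∫⁻ u in {u : Fin k → ℝ | StrictAnti u}, F (K (Fin.snoc u 0)) ∂(Measure.pi fun _ => μ))
            * (μ (Ioi (v 0)) ^ k * G (v 0)) ∂(Measure.pi fun _ => μ) := by
        rw [lintegral_strictAnti_append μ hf]
        congr 1
        refine lintegral_congr_ae (ae_restrict_of_ae ?_)
        filter_upwards [hstable] with v ⟨a, ha, hav⟩
        simp only [f, append_castLE, Fin.append_right]
        rw [lintegral_mul_const _ (by fun_prop), lintegral_snoc_excess hK hLS hF ha hav]
        ring
    _ = _ := by
        have htail : Measurable fun t => μ (Ioi t) :=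
          Antitone.measurable fun _ _ hst => measure_mono (Ioi_subset_Ioi hst)
        have hweight : Measurable fun v : Fin (r + 1) → ℝ => μ (Ioi (v 0)) ^ k * G (v 0) :=
          ((htail.pow_const k).mul hG).comp (measurable_pi_apply 0)
        rw [lintegral_const_mul _ hweight]
        ring

lemma lintegral_Km_mul_descStat_eq_mul (hμ : ThresholdStable μ) (hK : Measurable K)
    (hLS : LocScaleInvariant K) (hF : Measurable F) (hG : Measurable G) {n : ℕ} (hn : k < n) :
    ∫⁻ x : Fin n → ℝ, F (Km K n x) * G (descStat x k) ∂(Measure.pi fun _ => μ)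
      = (∫⁻ z : Fin k → ℝ, F (K (refVec z)) ∂(Measure.pi fun _ => μ))
        * ∫⁻ x : Fin n → ℝ, G (descStat x k) ∂(Measure.pi fun _ => μ) := by
  obtain ⟨r, rfl⟩ : ∃ r, n = k + (r + 1) := ⟨n - k - 1, by omega⟩
  have hmass : 1 = k.factorial * (Measure.pi fun _ => μ) {u : Fin k → ℝ | StrictAnti u} := by
    simpa using lintegral_refVec (μ := μ) (F := 1) hK measurable_one
  have hthreshold := lintegral_Km_mul_descStat hμ hK hLS measurable_one hG r
  simp only [Pi.one_apply, one_mul, lintegral_one, Measure.restrict_apply_univ] at hthreshold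
  rw [lintegral_Km_mul_descStat hμ hK hLS hF hG, hthreshold, lintegral_refVec hK hF]
  conv_lhs => rw [← one_mul (_ * _), hmass]
  ring

lemma map_Km_prod_descStat (hμ : ThresholdStable μ) (hK : Measurable K)
    (hLS : LocScaleInvariant K) {n : ℕ} (hn : k < n) :
    (Measure.pi fun _ => μ).map (fun x : Fin n → ℝ => (Km K n x, descStat x k))
      = ((Measure.pi fun _ => μ).map fun z : Fin k → ℝ => K (refVec z)).prod
        ((Measure.pi fun _ => μ).map fun x : Fin n → ℝ => descStat x k) := by
  have hKm := measurable_Km (n := n) hK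
  have hKref : Measurable fun z : Fin k → ℝ => K (refVec z) := hK.comp measurable_refVec
  refine (Measure.prod_eq fun A B hA hB => ?_).symm
  have hA' : Measurable (A.indicator (1 : ℝ → ℝ≥0∞)) := measurable_one.indicator hA
  have hB' : Measurable (B.indicator (1 : ℝ → ℝ≥0∞)) := measurable_one.indicator hB
  rw [← lintegral_indicator_one (hA.prod hB), ← lintegral_indicator_one hA,
    ← lintegral_indicator_one hB, lintegral_map hA' hKref,
    lintegral_map hB' (measurable_descStat k),
    lintegral_map (measurable_one.indicator (hA.prod hB)) (hKm.prodMk (measurable_descStat k)),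
    ← lintegral_Km_mul_descStat_eq_mul hμ hK hLS hA' hB' hn]
  simp only [indicator_prod_one]

end ThresholdStable

section RepresentingVector

variable {μ : Measure ℝ} [IsProbabilityMeasure μ] [NullSingletonClass μ] {k n : ℕ}
  {K : (Fin (k + 1) → ℝ) → ℝ}

lemma identDistrib_Km_refVec (hμ : ThresholdStable μ) (hK : Measurable K)
    (hLS : LocScaleInvariant K) (hn : k < n) :
    IdentDistrib (Km K n) (fun z : Fin k → ℝ => K (refVec z))
      (Measure.pi fun _ => μ) (Measure.pi fun _ => μ) where
  aemeasurable_fst := (measurable_Km hK).aemeasurable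
  aemeasurable_snd := (hK.comp measurable_refVec).aemeasurable
  map_eq := by
    have : IsProbabilityMeasure
        ((Measure.pi fun _ => μ).map fun x : Fin n → ℝ => descStat x k) :=
      Measure.isProbabilityMeasure_map (measurable_descStat k).aemeasurable
    have h := congrArg (Measure.map Prod.fst) (map_Km_prod_descStat hμ hK hLS hn)
    rwa [Measure.map_map measurable_fst ((measurable_Km hK).prodMk (measurable_descStat k)),
      Measure.map_fst_prod, measure_univ, one_smul] at h

lemma indepFun_Km_descStat (hμ : ThresholdStable μ) (hK : Measurable K)
    (hLS : LocScaleInvariant K) (hn : k < n) :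
    IndepFun (Km K n) (fun x => descStat x k) (Measure.pi fun _ => μ) := by
  rw [indepFun_iff_map_prod_eq_prod_map_map (measurable_Km hK).aemeasurable
    (measurable_descStat k).aemeasurable, (identDistrib_Km_refVec hμ hK hLS hn).map_eq]
  exact map_Km_prod_descStat hμ hK hLS hn

lemma setIntegral_Km_exceedCount (hμ : ThresholdStable μ) (hK : Measurable K)
    (hLS : LocScaleInvariant K) (c : ℝ) :
    ∫ x in {x : Fin n → ℝ | k < exceedCount x c}, Km K n x ∂(Measure.pi fun _ => μ)
      = (Measure.pi fun _ => μ).real {x : Fin n → ℝ | k < exceedCount x c}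
        * ∫ z : Fin k → ℝ, K (refVec z) ∂(Measure.pi fun _ => μ) := by
  rcases le_or_gt n k with hn | hn
  · simp [((exceedCount_le _ c).trans hn).not_gt]
  · simp only [← lt_descStat_iff hn]
    rw [← (identDistrib_Km_refVec hμ hK hLS hn).integral_eq]
    have hindep := (indepFun_Km_descStat hμ hK hLS hn).symm
    exact Indep.setIntegral_eq_mul (f := id) (measurable_descStat k).comap_le
      ((IndepFun_iff_Indep _ _ _).1 hindep) (measurable_Km hK).aemeasurable
      ⟨Ioi c, measurableSet_Ioi, rfl⟩ aestronglyMeasurable_id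

lemma natCast_mul_pi_exceedCount_lt_le (q : ℕ) (i : Fin n) :
    n * Measure.pi (fun _ => μ) {x : Fin n → ℝ | exceedCount x (x i) < q} ≤ q := by
  have hmeas (j : Fin n) : MeasurableSet {x : Fin n → ℝ | exceedCount x (x j) < q} :=
    measurable_exceedCount.comp (measurable_id.prodMk (measurable_pi_apply j)) measurableSet_Iio
  have hexch (j : Fin n) : Measure.pi (fun _ => μ) {x : Fin n → ℝ | exceedCount x (x i) < q}
      = Measure.pi (fun _ => μ) {x : Fin n → ℝ | exceedCount x (x j) < q} := by
    rw [← (measurePreserving_comp_perm μ (Equiv.swap i j)).measure_preimage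
      (hmeas i).nullMeasurableSet]
    simp only [preimage, mem_ofPred_eq, exceedCount_comp_perm, Function.comp_apply,
      Equiv.swap_apply_left]
  calc n * Measure.pi (fun _ => μ) {x : Fin n → ℝ | exceedCount x (x i) < q}
      = ∑ j, Measure.pi (fun _ => μ) {x : Fin n → ℝ | exceedCount x (x j) < q} := by
        simp only [← hexch, Finset.sum_const, Finset.card_univ, Fintype.card_fin, nsmul_eq_mul]
    _ = ∫⁻ x, (Finset.card {j : Fin n | exceedCount x (x j) < q} : ℝ≥0∞)
          ∂(Measure.pi fun _ => μ) := by
        simp only [← lintegral_indicator_one (hmeas _), Finset.card_filter, Nat.cast_sum]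
        rw [← lintegral_finsetSum _ fun j _ => measurable_one.indicator (hmeas j)]
        simp [indicator_apply]
    _ ≤ ∫⁻ _, q ∂(Measure.pi fun _ : Fin n => μ) := by
        refine lintegral_mono_ae ?_
        filter_upwards [pi_ae_injective μ] with x hx
        exact_mod_cast card_exceedCount_lt_le hx q
    _ = q := by simp

end RepresentingVector

section GeneralizedPareto

lemma hGamma_mul (γ : ℝ) {s y : ℝ} (hs : 0 < s) (hy : 0 < y) :
    hGamma γ (s * y) = s ^ γ * hGamma γ y + hGamma γ s := by
  unfold hGamma
  split_ifs with hγ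
  · simp [hγ, Real.log_mul hs.ne' hy.ne', add_comm]
  · rw [Real.mul_rpow hs.le hy.le]
    field_simp
    ring

lemma strictMonoOn_hGamma (γ : ℝ) : StrictMonoOn (hGamma γ) (Ioi 0) := by
  intro s hs t _ hst
  unfold hGamma
  split_ifs with hγ
  · exact Real.log_lt_log hs hst
  · rcases lt_or_gt_of_ne hγ with hγ | hγ
    · have := Real.rpow_lt_rpow_of_neg hs hst hγ
      rw [div_lt_div_right_of_neg hγ]
      gcongr
    · have := Real.rpow_lt_rpow (le_of_lt hs) hst hγ
      gcongr

lemma injOn_hGamma (γ : ℝ) : InjOn (hGamma γ) (Ioi 1) :=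
  (strictMonoOn_hGamma γ).injOn.mono (Ioi_subset_Ioi zero_le_one)

variable {t r x : ℝ}

instance : NullSingletonClass (paretoMeasure t r) := by
  unfold paretoMeasure
  infer_instance

lemma paretoMeasure_Ici (ht : 0 < t) (hr : 0 < r) (hx : t ≤ x) :
    paretoMeasure t r (Ici x) = ENNReal.ofReal ((t / x) ^ r) := by
  have hx0 : 0 < x := ht.trans_le hx
  have hint : IntegrableOn (fun y => r * t ^ r * y ^ (-(r + 1))) (Ioi x) :=
    (integrableOn_Ioi_rpow_of_lt (by linarith) hx0).const_mul _
  have hnonneg : 0 ≤ᵐ[volume.restrict (Ioi x)] fun y => r * t ^ r * y ^ (-(r + 1)) := by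
    filter_upwards [ae_restrict_mem measurableSet_Ioi] with y hy
    have : 0 < y := hx0.trans hy
    positivity
  calc paretoMeasure t r (Ici x)
      = ∫⁻ y in Ioi x, ENNReal.ofReal (r * t ^ r * y ^ (-(r + 1))) := by
        rw [← measure_congr Ioi_ae_eq_Ici, paretoMeasure, withDensity_apply _ measurableSet_Ioi]
        exact setLIntegral_congr_fun measurableSet_Ioi fun y hy =>
          paretoPDF_of_le (hx.trans (le_of_lt hy))
    _ = ENNReal.ofReal (r * t ^ r * (-x ^ (-(r + 1) + 1) / (-(r + 1) + 1))) := by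
        rw [← ofReal_integral_eq_lintegral_ofReal hint hnonneg, integral_const_mul,
          integral_Ioi_rpow_of_lt (by linarith) hx0]
    _ = ENNReal.ofReal ((t / x) ^ r) := by
        rw [Real.div_rpow ht.le hx0.le, neg_add_rev, neg_add_cancel_comm, Real.rpow_neg hx0.le]
        field_simp

lemma paretoMeasure_Ici_of_le (ht : 0 < t) (hr : 0 < r) (hx : x ≤ t) :
    paretoMeasure t r (Ici x) = 1 := by
  have := isProbabilityMeasure_paretoMeasure ht hr
  refine le_antisymm prob_le_one ?_
  calc (1 : ℝ≥0∞) = paretoMeasure t r (Ici t) := by simp [paretoMeasure_Ici ht hr, ht.ne']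
    _ ≤ paretoMeasure t r (Ici x) := measure_mono (Ici_subset_Ici.2 hx)

lemma ae_lt_paretoMeasure (ht : 0 < t) (hr : 0 < r) : ∀ᵐ y ∂paretoMeasure t r, t < y := by
  have := isProbabilityMeasure_paretoMeasure ht hr
  refine (mem_ae_iff_prob_eq_one measurableSet_Ioi).2 ?_
  rw [measure_congr Ioi_ae_eq_Ici, paretoMeasure_Ici_of_le ht hr le_rfl]

lemma restrict_Ioi_paretoMeasure (ht : 0 < t) (hr : 0 < r) {s : ℝ} (hs : t ≤ s) :
    (paretoMeasure t r).restrict (Ioi s)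
      = paretoMeasure t r (Ioi s) • (paretoMeasure t r).map fun y => s / t * y := by
  have := isProbabilityMeasure_paretoMeasure ht hr
  have hs0 : 0 < s := ht.trans_le hs
  rw [restrict_Ioi_eq_restrict_Ici, measure_congr Ioi_ae_eq_Ici]
  refine Measure.ext_of_Ici _ _ fun x => ?_
  have hpre : (fun y => s / t * y) ⁻¹' Ici x = Ici (x / (s / t)) := by
    ext y
    simp [div_le_iff₀' (div_pos hs0 ht)]
  rw [Measure.restrict_apply measurableSet_Ici, Ici_inter_Ici, Measure.smul_apply,
    Measure.map_apply (by fun_prop) measurableSet_Ici, hpre, smul_eq_mul]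
  rcases le_total x s with hxs | hxs
  · have : x / (s / t) ≤ t := by rwa [div_le_iff₀ (by positivity), mul_div_cancel₀ _ ht.ne']
    rw [sup_of_le_right hxs, paretoMeasure_Ici_of_le ht hr this, mul_one]
  · have : t ≤ x / (s / t) := by rwa [le_div_iff₀ (by positivity), mul_div_cancel₀ _ ht.ne']
    have hx0 : 0 < x := hs0.trans_le hxs
    rw [sup_of_le_left hxs, paretoMeasure_Ici ht hr (hs.trans hxs), paretoMeasure_Ici ht hr hs,
      paretoMeasure_Ici ht hr this, ← ENNReal.ofReal_mul (by positivity),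
      ← Real.mul_rpow (by positivity) (by positivity)]
    congr 2
    field_simp

lemma ae_one_lt_pareto1 : ∀ᵐ y ∂pareto1, 1 < y := ae_lt_paretoMeasure one_pos one_pos

lemma ae_gpMeasure_mem_image_hGamma (γ : ℝ) : ∀ᵐ t ∂gpMeasure γ, t ∈ hGamma γ '' Ioi 1 := by
  have himage : MeasurableSet (hGamma γ '' Ioi 1) :=
    measurableSet_Ioi.image_of_measurable_injOn (measurable_hGamma γ)
      (injOn_hGamma γ)
  refine (ae_map_iff (p := (· ∈ hGamma γ '' Ioi 1)) (measurable_hGamma γ).aemeasurable himage).2 ?_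
  filter_upwards [ae_one_lt_pareto1] with y hy using mem_image_of_mem _ hy

instance (γ : ℝ) : NullSingletonClass (gpMeasure γ) where
  measure_singleton t := by
    have hsubsingleton : (hGamma γ ⁻¹' {t} ∩ Ioi 1).Subsingleton := fun x hx y hy =>
      injOn_hGamma γ hx.2 hy.2 (hx.1.trans hy.1.symm)
    rw [gpMeasure, Measure.map_apply (measurable_hGamma γ) (measurableSet_singleton t),
      ← measure_inter_conull (t := Ioi 1) ae_one_lt_pareto1]
    exact hsubsingleton.measure_zero (paretoMeasure 1 1)

theorem thresholdStable_gpMeasure (γ : ℝ) : ThresholdStable (gpMeasure γ) := by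
  filter_upwards [ae_gpMeasure_mem_image_hGamma γ]
  rintro _ ⟨s, hs, rfl⟩
  have hs0 : 0 < s := zero_lt_one.trans hs
  have hIoi : hGamma γ ⁻¹' Ioi (hGamma γ s) =ᵐ[pareto1] Ioi s := by
    filter_upwards [ae_one_lt_pareto1] with y hy
    exact propext ((strictMonoOn_hGamma γ).lt_iff_lt hs0 (zero_lt_one.trans hy))
  have hscale : (fun y => hGamma γ (s / 1 * y))
      =ᵐ[pareto1] fun y => s ^ γ * hGamma γ y + hGamma γ s := by
    filter_upwards [ae_one_lt_pareto1] with y hy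
    rw [div_one, hGamma_mul γ hs0 (zero_lt_one.trans hy)]
  have hpareto : pareto1.restrict (Ioi s) = pareto1 (Ioi s) • pareto1.map fun y => s / 1 * y :=
    restrict_Ioi_paretoMeasure one_pos one_pos (le_of_lt hs)
  have hh := measurable_hGamma γ
  refine ⟨s ^ γ, by positivity, ?_⟩
  rw [gpMeasure, Measure.restrict_map hh measurableSet_Ioi, Measure.map_apply hh measurableSet_Ioi,
    measure_congr hIoi, Measure.restrict_congr_set hIoi, hpareto, Measure.map_smul,
    Measure.map_map hh (by fun_prop), Measure.map_map (by fun_prop) hh]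
  congr 1
  exact Measure.map_congr hscale

end GeneralizedPareto

section Holder

variable {Ω : Type*} [MeasurableSpace Ω] {P : Measure Ω} {X Y : Ω → ℝ} {p : ℝ≥0∞}

lemma one_sub_two_div_toReal_nonneg (hp : 2 ≤ p) : 0 ≤ 1 - 2 / p.toReal := by
  rcases eq_or_ne p ⊤ with rfl | hp_top
  · simp
  · have : 2 ≤ p.toReal := ENNReal.toReal_mono hp_top hp
    exact sub_nonneg.2 (div_le_one_of_le₀ this ENNReal.toReal_nonneg)

lemma integrable_mul_of_two_le [IsFiniteMeasure P] (hp : 2 ≤ p) (hX : MemLp X p P)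
    (hY : MemLp Y p P) : Integrable (fun ω => X ω * Y ω) P :=
  (hX.mono_exponent hp).integrable_mul (hY.mono_exponent hp)

lemma enorm_setIntegral_mul_le (hp : 2 ≤ p) (hX : AEStronglyMeasurable X P)
    (hY : AEStronglyMeasurable Y P) (s : Set Ω) :
    ‖∫ ω in s, X ω * Y ω ∂P‖ₑ ≤ eLpNorm X p P * eLpNorm Y p P * P s ^ (1 - 2 / p.toReal) := by
  have hexp : 0 ≤ 1 / (2 : ℝ≥0∞).toReal - 1 / p.toReal := by
    have := one_sub_two_div_toReal_nonneg hp
    rw [ENNReal.toReal_ofNat]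
    linear_combination this / 2
  have hL2 {W : Ω → ℝ} (hW : AEStronglyMeasurable W P) : eLpNorm W 2 (P.restrict s)
      ≤ eLpNorm W p P * P s ^ (1 / (2 : ℝ≥0∞).toReal - 1 / p.toReal) := by
    refine (eLpNorm_le_eLpNorm_mul_rpow_measure_univ hp hW.restrict).trans ?_
    rw [Measure.restrict_apply_univ]
    gcongr
    exact Measure.restrict_le_self
  calc ‖∫ ω in s, X ω * Y ω ∂P‖ₑ ≤ eLpNorm (X • Y) 1 (P.restrict s) := by
        rw [eLpNorm_one_eq_lintegral_enorm]
        exact enorm_integral_le_lintegral_enorm _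
    _ ≤ eLpNorm X 2 (P.restrict s) * eLpNorm Y 2 (P.restrict s) :=
        eLpNorm_smul_le_mul_eLpNorm hY.restrict hX.restrict
    _ ≤ _ := mul_le_mul' (hL2 hX) (hL2 hY)
    _ = _ := by
        rw [mul_mul_mul_comm, ← ENNReal.rpow_add_of_nonneg _ _ hexp hexp, ENNReal.toReal_ofNat]
        congr 2
        ring

lemma covariance_le_of_setIntegral_le [IsProbabilityMeasure P] (hp : 2 ≤ p) (hX : MemLp X p P)
    (hY : MemLp Y p P) {s : Set Ω} (hs : MeasurableSet s)
    (h : ∫ ω in s, X ω * Y ω ∂P ≤ P[X] * P[Y]) :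
    cov[X, Y; P]
      ≤ lpNorm X p P * lpNorm Y p P * P.real sᶜ ^ (1 - 2 / p.toReal) := by
  have hcompl : ∫ ω in sᶜ, X ω * Y ω ∂P
      ≤ lpNorm X p P * lpNorm Y p P * P.real sᶜ ^ (1 - 2 / p.toReal) := by
    rw [← toReal_eLpNorm hX.1, ← toReal_eLpNorm hY.1, measureReal_def, ENNReal.toReal_rpow,
      ← ENNReal.toReal_mul, ← ENNReal.toReal_mul]
    refine (le_abs_self _).trans ?_
    rw [← Real.norm_eq_abs, ← toReal_enorm]
    refine ENNReal.toReal_mono ?_ (enorm_setIntegral_mul_le hp hX.1 hY.1 sᶜ)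
    exact ENNReal.mul_ne_top (ENNReal.mul_ne_top hX.2.ne hY.2.ne)
      (ENNReal.rpow_ne_top_of_nonneg (one_sub_two_div_toReal_nonneg hp) (measure_ne_top P _))
  have hsplit := integral_add_compl hs (integrable_mul_of_two_le hp hX hY)
  rw [covariance_eq_sub (hX.mono_exponent hp) (hY.mono_exponent hp)]
  simp only [Pi.mul_apply]
  linarith

end Holder

lemma identDistrib_comp_measurePreserving {α β δ Ω : Type*} [MeasurableSpace α]
    [MeasurableSpace β] [MeasurableSpace δ] [MeasurableSpace Ω] {μ : Measure α} {ν : Measure β}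
    {P : Measure Ω} {f : α → δ} {g : β → δ} {φ : Ω → α} (h : IdentDistrib f g μ ν)
    (hφ : MeasurePreserving φ P μ) : IdentDistrib (fun ω => f (φ ω)) g P ν :=
  have hg : HasLaw g (ν.map g) ν := ⟨h.aemeasurable_snd, rfl⟩
  ((h.symm.hasLaw hg).fun_comp hφ.hasLaw).identDistrib hg

lemma lpNorm_congr_identDistrib {α β : Type*} [MeasurableSpace α] [MeasurableSpace β]
    {μ : Measure α} {ν : Measure β} {f : α → ℝ} {g : β → ℝ} (h : IdentDistrib f g μ ν)
    (p : ℝ≥0∞) : lpNorm f p μ = lpNorm g p ν := by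
  rw [← toReal_eLpNorm h.aestronglyMeasurable_fst, ← toReal_eLpNorm h.symm.aestronglyMeasurable_fst,
    h.eLpNorm_eq]

section OverlappingBlocks

/-- The law of `(w, u, v)` for an iid sample of size `2 n + 1` from `μ`, split into one entry `w`
and two blocks `u`, `v` of length `n`. The samples `(w, u)` and `(w, v)` of size `n + 1` then
share exactly the entry `w`. -/
def overlapLaw (μ : Measure ℝ) (n : ℕ) : Measure (ℝ × (Fin n → ℝ) × (Fin n → ℝ)) :=
  μ.prod ((Measure.pi fun _ => μ).prod (Measure.pi fun _ => μ))

lemma hasLaw_overlapLaw {Ω I : Type*} [MeasurableSpace Ω] {P : Measure Ω} {μ : Measure ℝ}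
    [IsProbabilityMeasure μ] {n : ℕ} {Z : I → Ω → ℝ} (hZ : ∀ i, HasLaw (Z i) μ P)
    (hindep : iIndepFun Z P) {c : I} {f g : Fin n → I}
    (hinj : Function.Injective (Sum.elim (fun _ : Unit => c) (Sum.elim f g))) :
    HasLaw (fun ω => (Z c ω, (fun j => Z (f j) ω), fun j => Z (g j) ω)) (overlapLaw μ n) P :=
  (((measurePreserving_eval (fun _ : Unit => μ) ()).prod
      (measurePreserving_sumPiEquivProdPi fun _ : Fin n ⊕ Fin n => μ)).comp
    (measurePreserving_sumPiEquivProdPi fun _ : Unit ⊕ (Fin n ⊕ Fin n) => μ)).fun_comp_hasLaw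
    (iIndepFun.hasLaw_pi (fun _ => hZ _) (hindep.precomp hinj))

variable {μ : Measure ℝ} [IsProbabilityMeasure μ] {k n : ℕ} {K : (Fin (k + 1) → ℝ) → ℝ}

instance : IsProbabilityMeasure (overlapLaw μ n) :=
  inferInstanceAs (IsProbabilityMeasure (μ.prod _))

lemma measurePreserving_insertNth_left (i : Fin (n + 1)) :
    MeasurePreserving (fun p : ℝ × (Fin n → ℝ) × (Fin n → ℝ) => i.insertNth p.1 p.2.1)
      (overlapLaw μ n) (Measure.pi fun _ : Fin (n + 1) => μ) :=
  ((measurePreserving_piFinSuccAbove (fun _ => μ) i).symm _).comp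
    ((MeasurePreserving.id μ).prod measurePreserving_fst)

lemma measurePreserving_insertNth_right (i : Fin (n + 1)) :
    MeasurePreserving (fun p : ℝ × (Fin n → ℝ) × (Fin n → ℝ) => i.insertNth p.1 p.2.2)
      (overlapLaw μ n) (Measure.pi fun _ : Fin (n + 1) => μ) :=
  ((measurePreserving_piFinSuccAbove (fun _ => μ) i).symm _).comp
    ((MeasurePreserving.id μ).prod measurePreserving_snd)

lemma exceedCount_insertNth_self (i : Fin (n + 1)) (c : ℝ) (u : Fin n → ℝ) :
    exceedCount (i.insertNth c u) c = exceedCount u c := by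
  simpa using (exceedCount_removeNth_self (i.insertNth c u) i).symm

lemma Km_insertNth {q : ℕ} (K : (Fin q → ℝ) → ℝ) {c : ℝ} {u : Fin n → ℝ}
    (h : q ≤ exceedCount u c) (i : Fin (n + 1)) :
    Km K (n + 1) (i.insertNth c u) = Km K n u := by
  rw [← Km_removeNth K (i := i) (by simpa [exceedCount_insertNth_self] using h),
    Fin.removeNth_insertNth]

variable (n) in
/-- The event that the entry `w` shared by the samples `(w, u)` and `(w, v)` is not among the
`q` largest entries of either of them. -/
def sharedBelowTop (q : ℕ) : Set (ℝ × (Fin n → ℝ) × (Fin n → ℝ)) :=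
  {p | q ≤ exceedCount p.2.1 p.1 ∧ q ≤ exceedCount p.2.2 p.1}

lemma measurableSet_sharedBelowTop (q : ℕ) : MeasurableSet (sharedBelowTop n q) :=
  (measurable_exceedCount.comp (measurable_snd.fst.prodMk measurable_fst) measurableSet_Ici).inter
    (measurable_exceedCount.comp (measurable_snd.snd.prodMk measurable_fst) measurableSet_Ici)

section

variable [NullSingletonClass μ]

lemma overlapLaw_compl_sharedBelowTop_le (q : ℕ) :
    (overlapLaw μ n).real (sharedBelowTop n q)ᶜ ≤ 2 * q / (n + 1) := by
  set T : Set (Fin (n + 1) → ℝ) := {x | exceedCount x (x 0) < q}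
  have hT : MeasurableSet T :=
    measurable_exceedCount.comp (measurable_id.prodMk (measurable_pi_apply 0)) measurableSet_Iio
  have hprob : (Measure.pi fun _ => μ).real T ≤ q / (n + 1) := by
    have h := ENNReal.toReal_mono (ENNReal.natCast_ne_top q)
      (natCast_mul_pi_exceedCount_lt_le (μ := μ) q (0 : Fin (n + 1)))
    rw [ENNReal.toReal_mul, ENNReal.toReal_natCast, ENNReal.toReal_natCast, Nat.cast_succ] at h
    exact (le_div_iff₀' (by positivity)).2 h
  have hcover : (sharedBelowTop n q)ᶜ =
      (fun p => Fin.insertNth 0 p.1 p.2.1) ⁻¹' T ∪ (fun p => Fin.insertNth 0 p.1 p.2.2) ⁻¹' T := by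
    ext p
    simp only [sharedBelowTop, T, mem_compl_iff, mem_ofPred_eq, not_and_or, not_le, mem_union,
      mem_preimage, Fin.insertNth_apply_same, exceedCount_insertNth_self]
  calc (overlapLaw μ n).real (sharedBelowTop n q)ᶜ
      ≤ (Measure.pi fun _ => μ).real T + (Measure.pi fun _ => μ).real T := by
        rw [hcover]
        refine (measureReal_union_le _ _).trans_eq (congrArg₂ (· + ·) ?_ ?_)
        · exact (measurePreserving_insertNth_left 0).measureReal_preimage hT.nullMeasurableSet
        · exact (measurePreserving_insertNth_right 0).measureReal_preimage hT.nullMeasurableSet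
    _ ≤ 2 * q / (n + 1) := by linear_combination 2 * hprob

lemma setIntegral_sharedBelowTop_le (hμ : ThresholdStable μ) (hK : Measurable K)
    (hLS : LocScaleInvariant K)
    (hint : Integrable (fun z : Fin k → ℝ => K (refVec z)) (Measure.pi fun _ => μ)) :
    ∫ p in sharedBelowTop n (k + 1), Km K n p.2.1 * Km K n p.2.2 ∂(overlapLaw μ n)
      ≤ (∫ z : Fin k → ℝ, K (refVec z) ∂(Measure.pi fun _ => μ)) ^ 2 := by
  rcases le_or_gt n k with hn | hn
  · simp [sharedBelowTop, ((exceedCount_le _ _).trans hn).not_gt, sq_nonneg]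
  set S := sharedBelowTop n (k + 1)
  set A : ℝ → Set (Fin n → ℝ) := fun c => {x | k < exceedCount x c}
  set θ := ∫ z : Fin k → ℝ, K (refVec z) ∂(Measure.pi fun _ => μ)
  have hS : MeasurableSet S := measurableSet_sharedBelowTop _
  have hA (c : ℝ) : MeasurableSet (A c) :=
    measurable_exceedCount.comp (measurable_id.prodMk measurable_const) measurableSet_Ioi
  have hint_n : Integrable (Km K n) (Measure.pi fun _ => μ) :=
    (identDistrib_Km_refVec hμ hK hLS hn).integrable_iff.2 hint
  have hslice (c : ℝ) : ∫ y, S.indicator (fun p => Km K n p.2.1 * Km K n p.2.2) (c, y)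
      ∂((Measure.pi fun _ => μ).prod (Measure.pi fun _ => μ))
      = ((Measure.pi fun _ => μ).real (A c) * θ) ^ 2 := by
    change ∫ y, (A c ×ˢ A c).indicator (fun y => Km K n y.1 * Km K n y.2) y ∂_ = _
    rw [integral_indicator ((hA c).prod (hA c)), setIntegral_prod_mul,
      setIntegral_Km_exceedCount hμ hK hLS, sq]
  rw [← integral_indicator hS, overlapLaw,
    integral_prod _ (((hint_n.mul_prod hint_n).comp_snd μ).indicator hS)]
  calc ∫ c, ∫ y, S.indicator (fun p => Km K n p.2.1 * Km K n p.2.2) (c, y) ∂_ ∂μ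
      = ∫ c, ((Measure.pi fun _ => μ).real (A c) * θ) ^ 2 ∂μ := by simp only [hslice]
    _ ≤ ∫ _, θ ^ 2 ∂μ := by
        refine integral_mono_of_nonneg (ae_of_all _ fun c => sq_nonneg _)
          (integrable_const _) (ae_of_all _ fun c => ?_)
        simp only [mul_pow]
        exact mul_le_of_le_one_left (sq_nonneg θ)
          (pow_le_one₀ measureReal_nonneg measureReal_le_one)
    _ = θ ^ 2 := by simp

theorem covariance_Km_insertNth_le (hμ : ThresholdStable μ) (hK : Measurable K)
    (hLS : LocScaleInvariant K) (hn : k ≤ n) {p : ℝ≥0∞} (hp : 2 ≤ p)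
    (hKp : MemLp (fun z : Fin k → ℝ => K (refVec z)) p (Measure.pi fun _ => μ))
    (i i' : Fin (n + 1)) :
    cov[fun w => Km K (n + 1) (i.insertNth w.1 w.2.1),
        fun w => Km K (n + 1) (i'.insertNth w.1 w.2.2); overlapLaw μ n]
      ≤ lpNorm (fun z : Fin k → ℝ => K (refVec z)) p (Measure.pi fun _ => μ) ^ 2
        * (2 * (k + 1 : ℕ) / (n + 1)) ^ (1 - 2 / p.toReal) := by
  set X : ℝ × (Fin n → ℝ) × (Fin n → ℝ) → ℝ := fun w => Km K (n + 1) (i.insertNth w.1 w.2.1)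
  set Y : ℝ × (Fin n → ℝ) × (Fin n → ℝ) → ℝ := fun w => Km K (n + 1) (i'.insertNth w.1 w.2.2)
  set R : (Fin k → ℝ) → ℝ := fun z => K (refVec z)
  set S := sharedBelowTop n (k + 1)
  have hS : MeasurableSet S := measurableSet_sharedBelowTop _
  have hKm := identDistrib_Km_refVec hμ hK hLS (Nat.lt_succ_of_le hn)
  have hX := identDistrib_comp_measurePreserving hKm (measurePreserving_insertNth_left i)
  have hY := identDistrib_comp_measurePreserving hKm (measurePreserving_insertNth_right i')
  have htop : ∫ w in S, X w * Y w ∂(overlapLaw μ n)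
      ≤ (∫ w, X w ∂(overlapLaw μ n)) * ∫ w, Y w ∂(overlapLaw μ n) := by
    rw [hX.integral_eq, hY.integral_eq, ← sq]
    refine le_of_eq_of_le (setIntegral_congr_fun hS fun w hw => ?_)
      (setIntegral_sharedBelowTop_le hμ hK hLS (hKp.integrable (one_le_two.trans hp)))
    exact congrArg₂ (· * ·) (Km_insertNth K hw.1 i) (Km_insertNth K hw.2 i')
  calc cov[X, Y; overlapLaw μ n]
      ≤ lpNorm X p (overlapLaw μ n) * lpNorm Y p (overlapLaw μ n)
        * (overlapLaw μ n).real Sᶜ ^ (1 - 2 / p.toReal) :=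
        covariance_le_of_setIntegral_le hp (hX.memLp_iff.2 hKp) (hY.memLp_iff.2 hKp) hS htop
    _ ≤ _ := by
        rw [lpNorm_congr_identDistrib hX, lpNorm_congr_identDistrib hY, ← sq]
        gcongr
        · exact one_sub_two_div_toReal_nonneg hp
        · exact overlapLaw_compl_sharedBelowTop_le (k + 1)

end

end OverlappingBlocks

section Zeta

variable {Ω : Type*} [MeasurableSpace Ω] {P : Measure Ω}

lemma hasLaw_consecutive_blocks {μ : Measure ℝ} [IsProbabilityMeasure μ] {Z : ℕ → Ω → ℝ}
    (hZ : ∀ i, HasLaw (Z i) μ P) (hindep : iIndepFun Z P) (n : ℕ) :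
    HasLaw (fun ω => (Z n ω, (fun j : Fin n => Z j ω), fun j : Fin n => Z (n + (j + 1)) ω))
      (overlapLaw μ n) P := by
  refine hasLaw_overlapLaw hZ hindep (c := n) (f := fun j => j) (g := fun j => n + (j + 1)) ?_
  rintro (_ | _ | _) (_ | _ | _) h <;> grind

lemma insertNth_last_range {n : ℕ} (z : ℕ → ℝ) :
    (Fin.last n).insertNth (z n) (fun j : Fin n => z j) = fun i : Fin (n + 1) => z i := by
  rw [Fin.insertNth_last']
  exact Fin.snoc_init_self (fun i : Fin (n + 1) => z i)

lemma insertNth_zero_range {n : ℕ} (z : ℕ → ℝ) :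
    (0 : Fin (n + 1)).insertNth (z 0) (fun j : Fin n => z (j + 1))
      = fun i : Fin (n + 1) => z i := by
  rw [Fin.insertNth_zero']
  exact Fin.cons_self_tail (fun i : Fin (n + 1) => z i)

lemma zetaCov_one_eq_covariance {μ : Measure ℝ} [IsProbabilityMeasure μ] {Z : ℕ → Ω → ℝ}
    (hZ : ∀ i, HasLaw (Z i) μ P) (hindep : iIndepFun Z P) {q n : ℕ} {K : (Fin q → ℝ) → ℝ}
    (hK : MemLp (Km K (n + 1)) 2 (Measure.pi fun _ => μ)) :
    zetaCov P K Z (n + 1) 1 = cov[fun w => Km K (n + 1) ((Fin.last n).insertNth w.1 w.2.1),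
      fun w => Km K (n + 1) (Fin.insertNth 0 w.1 w.2.2); overlapLaw μ n] := by
  have hlaw := hasLaw_consecutive_blocks hZ hindep n
  have hX := hK.comp_measurePreserving (measurePreserving_insertNth_left (Fin.last n))
  have hY := hK.comp_measurePreserving (measurePreserving_insertNth_right 0)
  have hleft (ω : Ω) := insertNth_last_range (n := n) fun i => Z i ω
  have hright (ω : Ω) := insertNth_zero_range (n := n) fun i => Z (n + i) ω
  refine Eq.trans ?_ (covariance_eq_sub hX hY).symm
  rw [← hlaw.integral_comp hX.1, ← hlaw.integral_comp hY.1,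
    ← hlaw.integral_comp (hX.1.mul hY.1)]
  simp only [add_zero] at hright
  simp only [zetaCov, Function.comp_def, Pi.mul_apply, add_tsub_cancel_right, hleft, hright]

theorem zeta_m_one_bound_general {μ : Measure ℝ} [IsProbabilityMeasure μ] [NullSingletonClass μ]
    (hμ : ThresholdStable μ) {q m : ℕ} (hq : 0 < q) (hm : q ≤ m) {K : (Fin q → ℝ) → ℝ}
    (hK : Measurable K) (hLS : LocScaleInvariant K) {a : ℝ} (ha : 2 ≤ a)
    (hKa : MemLp (fun z => K (refVec z)) (.ofReal a) (Measure.pi fun _ : Fin (q - 1) => μ))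
    {Z : ℕ → Ω → ℝ} (hZ : ∀ i, HasLaw (Z i) μ P) (hindep : iIndepFun Z P) :
    zetaCov P K Z m 1 ≤ (2 * (q : ℝ)) ^ (1 - 2 / a)
      * lpNorm (fun z => K (refVec z)) (.ofReal a) (Measure.pi fun _ : Fin (q - 1) => μ) ^ 2
      * (m : ℝ) ^ (2 / a - 1) := by
  obtain ⟨k, rfl⟩ := Nat.exists_eq_add_one.2 hq
  obtain ⟨n, rfl⟩ := Nat.exists_eq_add_one.2 (hq.trans_le hm)
  have ha2 : 2 ≤ ENNReal.ofReal a := by simpa using ENNReal.ofReal_le_ofReal ha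
  have hKm : MemLp (Km K (n + 1)) 2 (Measure.pi fun _ => μ) :=
    (identDistrib_Km_refVec hμ hK hLS hm).memLp_iff.2 (hKa.mono_exponent ha2)
  have hpow : (2 * (k + 1 : ℕ) / (n + 1) : ℝ) ^ (1 - 2 / a)
      = (2 * (k + 1 : ℕ)) ^ (1 - 2 / a) * ((n + 1 : ℕ) : ℝ) ^ (2 / a - 1) := by
    rw [div_rpow (by positivity) (by positivity), ← neg_sub (1 : ℝ), rpow_neg (by positivity),
      div_eq_mul_inv, Nat.cast_succ n]
  have hcov := covariance_Km_insertNth_le hμ hK hLS (Nat.le_of_succ_le_succ hm) ha2 hKa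
    (Fin.last n) 0
  rw [ENNReal.toReal_ofReal (by positivity), hpow, mul_left_comm, ← mul_assoc] at hcov
  exact (zetaCov_one_eq_covariance hZ hindep hKm).trans_le hcov

end Zeta

section Norm

variable {γ : ℝ} {q : ℕ} {K : (Fin q → ℝ) → ℝ} {a : ℝ}

lemma memLp_refVec_of_momentCond (hK : Measurable K) (hMom : MomentCond γ K) (ha : 0 < a) :
    MemLp (fun z => K (refVec z)) (.ofReal a) (Measure.pi fun _ : Fin (q - 1) => gpMeasure γ) := by
  refine ⟨(hK.comp measurable_refVec).aestronglyMeasurable, ?_⟩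
  rw [eLpNorm_lt_top_iff_lintegral_rpow_enorm_lt_top (by simpa using ha) ENNReal.ofReal_ne_top,
    ENNReal.toReal_ofReal ha.le]
  simp only [enorm_eq_ofReal_abs, ENNReal.ofReal_rpow_of_nonneg (abs_nonneg _) ha.le]
  exact hMom a ha

lemma normKa_eq_lpNorm (hK : Measurable K) (ha : 0 < a) :
    normKa γ K a = lpNorm (fun z => K (refVec z)) (.ofReal a)
      (Measure.pi fun _ : Fin (q - 1) => gpMeasure γ) := by
  have hR : Measurable fun z : Fin (q - 1) → ℝ => K (refVec z) := hK.comp measurable_refVec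
  rw [lpNorm_eq_integral_norm_rpow_toReal (by simpa using ha) ENNReal.ofReal_ne_top
    hR.aestronglyMeasurable, ENNReal.toReal_ofReal ha.le, ← one_div]
  rfl

end Norm

/-- Lemma: bound on `ζ_{m,1}`.
For every `m ≥ q` and `a > 2`, `ζ_{m,1} ≤ (2q)^{1-2/a} ‖K‖_a² m^{2/a-1}`. -/
theorem zeta_m_one_bound
    {Ω : Type*} [MeasurableSpace Ω] (P : Measure Ω) [IsProbabilityMeasure P]
    (γ : ℝ) (q : ℕ) (hq : 3 ≤ q)
    (K : (Fin q → ℝ) → ℝ) (hKmeas : Measurable K)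
    (hLS : LocScaleInvariant K)
    (hNonconst : ∃ x y : Fin q → ℝ, K x ≠ K y)
    (hMom : MomentCond γ K)
    (Z : ℕ → Ω → ℝ) (hZmeas : ∀ i, Measurable (Z i))
    (hIndep : iIndepFun Z P)
    (hDist : ∀ i, Measure.map (Z i) P = gpMeasure γ) :
    ∀ m : ℕ, q ≤ m → ∀ a : ℝ, 2 < a →
      zetaCov P K Z m 1 ≤
        (2 * (q : ℝ)) ^ (1 - 2/a) * (normKa γ K a) ^ 2 * (m : ℝ) ^ (2/a - 1) := by
  intro m hm a ha
  have ha_pos : 0 < a := two_pos.trans ha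
  rw [normKa_eq_lpNorm hKmeas ha_pos]
  exact zeta_m_one_bound_general (thresholdStable_gpMeasure γ) (by lia) hm hKmeas hLS ha.le
    (memLp_refVec_of_momentCond hKmeas hMom ha_pos)
    (fun i => ⟨(hZmeas i).aemeasurable, hDist i⟩) hIndep

end
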